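/- Let α ≠ 0 be fixed. Let v, w : (−1,1) → ℝ be C¹, positive, each strictly decreasing on (−1,0), strictly increasing on (0,1), and tending to +∞ as x → ±1, with minimum values c_v = v(0) > 0 and c_w = w(0) > 0. Suppose that for every λ ∈ ℝ the two-dimensional Lebesgue measure of {(x,ξ) ∈ (−1,1) × ℝ : ξ²/v(x) + α²v(x) < λ} equals that of {(x,ξ) ∈ (−1,1) × ℝ : ξ²/w(x) + α²w(x) < λ}. Then c_v = c_w, and for every s > c_v the one-dimensional Lebesgue measure of {x ∈ (−1,1) : v(x) < s} equals that of {x ∈ (−1,1) : w(x) < s}. -/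

import Mathlib

open Set MeasureTheory Filter Topology

lemma abel_const_ne_top :
    ∫⁻ u : ℝ, ENNReal.ofReal ((√(1 - u))⁻¹ * √u) ≠ ⊤ := by
  have hi : IntervalIntegrable (fun x : ℝ => (1 - x) ^ (-(1/2) : ℝ)) volume 0 1 := by
    have := (intervalIntegral.intervalIntegrable_rpow' (a := 1) (b := 0)
      (r := -(1/2)) (by norm_num)).comp_sub_left 1
    simpa using this
  rw [intervalIntegrable_iff_integrableOn_Ioc_of_le zero_le_one] at hi
  have h2 := hi.lintegral_lt_top
  refine ne_top_of_le_ne_top h2.ne ?_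
  rw [← lintegral_indicator measurableSet_Ioc]
  refine lintegral_mono fun u => ?_
  by_cases hu : u ∈ Ioc (0:ℝ) 1
  · rw [indicator_of_mem hu]
    refine ENNReal.ofReal_le_ofReal ?_
    rw [Real.rpow_neg (by linarith [hu.2]), ← Real.sqrt_eq_rpow]
    exact mul_le_of_le_one_right (by positivity) (Real.sqrt_le_one.2 hu.2)
  · rw [indicator_of_notMem hu]
    simp only [mem_Ioc, not_and_or, not_lt, not_le] at hu
    rcases hu with h | h
    · simp [Real.sqrt_eq_zero_of_nonpos h]
    · simp [Real.sqrt_eq_zero_of_nonpos (show 1 - u ≤ 0 by linarith)]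

lemma abel_const_ne_zero :
    ∫⁻ u : ℝ, ENNReal.ofReal ((√(1 - u))⁻¹ * √u) ≠ 0 := by
  rw [Ne, lintegral_eq_zero_iff (by fun_prop)]
  intro h
  have h1 : (Ioo (0:ℝ) 1) ⊆ {u | ¬ (ENNReal.ofReal ((√(1 - u))⁻¹ * √u) = 0)} := by
    intro u hu
    have : 0 < √(1 - u) := Real.sqrt_pos.2 (by linarith [hu.2])
    have : 0 < √u := Real.sqrt_pos.2 hu.1
    simp only [mem_ofPred_eq, ENNReal.ofReal_eq_zero, not_le]
    positivity
  have h2 : volume (Ioo (0:ℝ) 1) = 0 := measure_mono_null h1 (ae_iff.1 h)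
  simp at h2

lemma abel_kernel (t T : ℝ) :
    ∫⁻ τ : ℝ, ENNReal.ofReal ((√(T - τ))⁻¹ * √(τ - t))
      = (∫⁻ u : ℝ, ENNReal.ofReal ((√(1 - u))⁻¹ * √u)) * ENNReal.ofReal (T - t) := by
  rcases le_or_gt T t with h | h
  · rw [ENNReal.ofReal_of_nonpos (by linarith : T - t ≤ 0), mul_zero]
    rw [lintegral_eq_zero_iff (by fun_prop)]
    refine Eventually.of_forall fun τ => ?_
    rcases le_or_gt τ t with h' | h'
    · simp [Real.sqrt_eq_zero_of_nonpos (show τ - t ≤ 0 by linarith)]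
    · simp [Real.sqrt_eq_zero_of_nonpos (show T - τ ≤ 0 by linarith)]
  · have hh : 0 < T - t := by linarith
    have e := lintegral_image_eq_lintegral_abs_deriv_mul (s := univ)
      (f := fun u => (T - t) * u + t) (f' := fun _ => T - t) MeasurableSet.univ
      (fun x _ => by
        have := ((hasDerivAt_id x).const_mul (T - t)).add_const t
        exact (by simpa using this : HasDerivAt (fun u => (T - t) * u + t) (T - t) x).hasDerivWithinAt)
      (fun x _ y _ hxy => by
        have : (T - t) * x = (T - t) * y := by simpa using hxy
        exact mul_left_cancel₀ hh.ne' this)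
      (fun τ => ENNReal.ofReal ((√(T - τ))⁻¹ * √(τ - t)))
    have himg : (fun u => (T - t) * u + t) '' univ = univ := by
      rw [image_univ, range_eq_univ]
      intro y
      refine ⟨(y - t) / (T - t), ?_⟩
      simp only
      field_simp
      ring
    rw [himg, setLIntegral_univ, setLIntegral_univ] at e
    rw [e, mul_comm, ← lintegral_const_mul _ (by fun_prop)]
    refine lintegral_congr fun u => ?_
    rw [abs_of_pos hh]
    congr 2
    have e1 : T - ((T - t) * u + t) = (T - t) * (1 - u) := by ring
    have e2 : (T - t) * u + t - t = (T - t) * u := by ring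
    rw [e1, e2, Real.sqrt_mul hh.le, Real.sqrt_mul hh.le]
    have : 0 < √(T - t) := Real.sqrt_pos.2 hh
    rw [mul_inv]
    field_simp

lemma abel_transform (ν : Measure ℝ) [SFinite ν] (T : ℝ) :
    ∫⁻ τ : ℝ, ENNReal.ofReal ((√(T - τ))⁻¹) * ∫⁻ t, ENNReal.ofReal (√(τ - t)) ∂ν
      = (∫⁻ u : ℝ, ENNReal.ofReal ((√(1 - u))⁻¹ * √u)) * ∫⁻ t, ENNReal.ofReal (T - t) ∂ν := by
  rw [← lintegral_const_mul _ (by fun_prop)]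
  simp_rw [← abel_kernel]
  rw [← lintegral_lintegral_swap (by fun_prop)]
  refine lintegral_congr fun τ => ?_
  rw [← lintegral_const_mul _ (by fun_prop)]
  refine lintegral_congr fun t => ?_
  rw [ENNReal.ofReal_mul (by positivity)]

lemma first_moments_eq {ν₁ ν₂ : Measure ℝ} [SFinite ν₁] [SFinite ν₂]
    (h : ∀ τ : ℝ, ∫⁻ t, ENNReal.ofReal (√(τ - t)) ∂ν₁ = ∫⁻ t, ENNReal.ofReal (√(τ - t)) ∂ν₂)
    (T : ℝ) : ∫⁻ t, ENNReal.ofReal (T - t) ∂ν₁ = ∫⁻ t, ENNReal.ofReal (T - t) ∂ν₂ := by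
  have h1 := abel_transform ν₁ T
  have h2 := abel_transform ν₂ T
  simp_rw [h] at h1
  rw [h2] at h1
  exact ((ENNReal.mul_right_inj abel_const_ne_zero abel_const_ne_top).1 h1).symm

lemma Iic_le {ν₁ ν₂ : Measure ℝ}
    (h : ∀ T : ℝ, ∫⁻ t, ENNReal.ofReal (T - t) ∂ν₁ = ∫⁻ t, ENNReal.ofReal (T - t) ∂ν₂)
    (hfin : ∀ T : ℝ, ∫⁻ t, ENNReal.ofReal (T - t) ∂ν₁ ≠ ⊤)
    (hfin2 : ∀ T : ℝ, ν₂ (Iic T) ≠ ⊤) (T : ℝ) : ν₁ (Iic T) ≤ ν₂ (Iic T) := by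
  have key : ∀ r > T, ν₁ (Iic T) ≤ ν₂ (Iic r) := by
    intro r hr
    have a1 : ENNReal.ofReal (r - T) * ν₁ (Iic T) + ∫⁻ t, ENNReal.ofReal (T - t) ∂ν₁
        ≤ ∫⁻ t, ENNReal.ofReal (r - t) ∂ν₁ := by
      rw [← lintegral_indicator_const measurableSet_Iic, ← lintegral_add_right _ (by fun_prop)]
      refine lintegral_mono fun t => ?_
      by_cases ht : t ∈ Iic T
      · rw [indicator_of_mem ht, ← ENNReal.ofReal_add (by linarith) (by linarith [mem_Iic.1 ht])]
        exact ENNReal.ofReal_le_ofReal (by linarith)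
      · rw [indicator_of_notMem ht, zero_add]
        exact ENNReal.ofReal_le_ofReal (by linarith)
    have a2 : ∫⁻ t, ENNReal.ofReal (r - t) ∂ν₂
        ≤ ENNReal.ofReal (r - T) * ν₂ (Iic r) + ∫⁻ t, ENNReal.ofReal (T - t) ∂ν₂ := by
      rw [← lintegral_indicator_const measurableSet_Iic, ← lintegral_add_right _ (by fun_prop)]
      refine lintegral_mono fun t => ?_
      by_cases ht : t ∈ Iic r
      · rw [indicator_of_mem ht]
        refine le_trans (ENNReal.ofReal_le_ofReal (by linarith)) ENNReal.ofReal_add_le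
      · rw [ENNReal.ofReal_of_nonpos (by linarith [not_le.1 (mem_Iic.not.1 ht)])]
        exact bot_le
    rw [← h, ← h] at a2
    have a3 := (ENNReal.add_le_add_iff_right (hfin T)).1 (a1.trans a2)
    exact (ENNReal.mul_le_mul_iff_right (by simpa using hr) ENNReal.ofReal_ne_top).1 a3
  have ht := tendsto_measure_biInter_gt (μ := ν₂) (s := fun r : ℝ => Iic r) (a := T)
    (fun r _ => measurableSet_Iic.nullMeasurableSet) (fun i j _ hij => Iic_subset_Iic.2 hij)
    ⟨T + 1, by simp, hfin2 _⟩
  have hI : (⋂ r > T, Iic r) = Iic T := by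
    ext x
    simp only [mem_iInter, mem_Iic]
    exact ⟨fun hx => le_of_forall_gt_imp_ge_of_dense hx, fun hx r hr => hx.trans hr.le⟩
  rw [hI] at ht
  refine ge_of_tendsto ht ?_
  filter_upwards [self_mem_nhdsWithin] with r hr using key r hr

/-- Injectivity of the Abel transform, for weights `√t`. -/
lemma abel_injective {μ₁ μ₂ : Measure ℝ} [IsFiniteMeasure μ₁] [IsFiniteMeasure μ₂]
    (p₁ : ∀ᵐ t ∂μ₁, 0 < t) (p₂ : ∀ᵐ t ∂μ₂, 0 < t)
    (h : ∀ τ : ℝ, ∫⁻ t, ENNReal.ofReal (√t) * ENNReal.ofReal (√(τ - t)) ∂μ₁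
      = ∫⁻ t, ENNReal.ofReal (√t) * ENNReal.ofReal (√(τ - t)) ∂μ₂) : μ₁ = μ₂ := by
  set f : ℝ → ENNReal := fun t => ENNReal.ofReal (√t) with hf
  have hfm : Measurable f := by fun_prop
  have conv : ∀ (μ : Measure ℝ) (g : ℝ → ENNReal), Measurable g →
      ∫⁻ t, g t ∂(μ.withDensity f) = ∫⁻ t, f t * g t ∂μ := by
    intro μ g hg
    rw [lintegral_withDensity_eq_lintegral_mul _ hfm hg]
    rfl
  have h1 := first_moments_eq (ν₁ := μ₁.withDensity f) (ν₂ := μ₂.withDensity f) (by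
    intro τ
    rw [conv _ _ (by fun_prop), conv _ _ (by fun_prop)]
    exact h τ)
  have fin1 : ∀ (μ : Measure ℝ) [IsFiniteMeasure μ] (T : ℝ),
      ∫⁻ t, ENNReal.ofReal (T - t) ∂(μ.withDensity f) ≠ ⊤ := by
    intro μ _ T
    rw [conv _ _ (by fun_prop)]
    refine ne_top_of_le_ne_top (b := ∫⁻ t, ENNReal.ofReal (√T) * ENNReal.ofReal T ∂μ) ?_ ?_
    · rw [lintegral_const]
      finiteness
    · refine lintegral_mono fun t => ?_
      rcases le_or_gt t 0 with ht | ht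
      · simp [hf, Real.sqrt_eq_zero_of_nonpos ht]
      rcases le_or_gt T t with ht' | ht'
      · simp [ENNReal.ofReal_of_nonpos (show T - t ≤ 0 by linarith)]
      · exact mul_le_mul' (ENNReal.ofReal_le_ofReal (Real.sqrt_le_sqrt ht'.le))
          (ENNReal.ofReal_le_ofReal (by linarith))
  have fin2 : ∀ (μ : Measure ℝ) [IsFiniteMeasure μ] (T : ℝ),
      (μ.withDensity f) (Iic T) ≠ ⊤ := by
    intro μ _ T
    rw [withDensity_apply _ measurableSet_Iic]
    refine ne_top_of_le_ne_top (b := ∫⁻ t in Iic T, ENNReal.ofReal (√T) ∂μ) ?_ ?_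
    · rw [lintegral_const]
      finiteness
    · refine setLIntegral_mono (by fun_prop) fun t ht => ?_
      exact ENNReal.ofReal_le_ofReal (Real.sqrt_le_sqrt ht)
  have hIic : ∀ T, (μ₁.withDensity f) (Iic T) = (μ₂.withDensity f) (Iic T) := fun T =>
    le_antisymm (Iic_le h1 (fin1 μ₁) (fin2 μ₂) T)
      (Iic_le (fun T => (h1 T).symm) (fin1 μ₂) (fin2 μ₁) T)
  have hν : μ₁.withDensity f = μ₂.withDensity f := by
    refine Measure.ext_of_Ioc' _ _ (fun a b _ => ?_) (fun a b hab => ?_)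
    · exact ne_top_of_le_ne_top (fin2 μ₁ b) (measure_mono Ioc_subset_Iic_self)
    · have hI : Ioc a b = Iic b \ Iic a := by
        ext x
        simp [and_comm]
      rw [hI, measure_sdiff (Iic_subset_Iic.2 hab.le)
        measurableSet_Iic.nullMeasurableSet (fin2 μ₁ a), measure_sdiff (Iic_subset_Iic.2 hab.le)
        measurableSet_Iic.nullMeasurableSet (fin2 μ₂ a), hIic, hIic]
  have e1 : (μ₁.withDensity f).withDensity f⁻¹ = μ₁ := by
    refine withDensity_inv_same hfm ?_ (Eventually.of_forall fun t => ENNReal.ofReal_ne_top)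
    filter_upwards [p₁] with t ht
    simpa [hf, Real.sqrt_eq_zero'] using ht
  have e2 : (μ₂.withDensity f).withDensity f⁻¹ = μ₂ := by
    refine withDensity_inv_same hfm ?_ (Eventually.of_forall fun t => ENNReal.ofReal_ne_top)
    filter_upwards [p₂] with t ht
    simpa [hf, Real.sqrt_eq_zero'] using ht
  rw [← e1, ← e2, hν]

/-- Distribution measure of a well. -/
lemma exists_dist (α : ℝ) (hα : α ≠ 0) (v : ℝ → ℝ)
    (hc : ContinuousOn v (Ioo (-1) 1)) (hpos : ∀ x ∈ Ioo (-1 : ℝ) 1, 0 < v x) :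
    ∃ μ : Measure ℝ, IsFiniteMeasure μ ∧ (∀ᵐ t ∂μ, 0 < t) ∧
      (∀ s, μ (Iio s) = volume {x : ℝ | x ∈ Ioo (-1 : ℝ) 1 ∧ v x < s}) ∧
      ∀ τ : ℝ, volume {p : ℝ × ℝ | p.1 ∈ Ioo (-1 : ℝ) 1 ∧
          p.2 ^ 2 / v p.1 + α ^ 2 * v p.1 < α ^ 2 * τ}
        = ENNReal.ofReal (2 * |α|) *
          ∫⁻ t, ENNReal.ofReal (√t) * ENNReal.ofReal (√(τ - t)) ∂μ := by
  classical
  obtain ⟨V, hVm, hV⟩ : ∃ V : ℝ → ℝ, Measurable V ∧ ∀ x ∈ Ioo (-1 : ℝ) 1, V x = v x :=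
    ⟨(Ioo (-1 : ℝ) 1).piecewise v (fun _ => 1),
      hc.measurable_piecewise continuousOn_const measurableSet_Ioo,
      fun x hx => piecewise_eq_of_mem _ _ _ hx⟩
  refine ⟨(volume.restrict (Ioo (-1) 1)).map V, inferInstance, ?_, ?_, ?_⟩
  · rw [ae_map_iff hVm.aemeasurable measurableSet_Ioi]
    filter_upwards [ae_restrict_mem measurableSet_Ioo] with x hx
    rw [hV x hx]
    exact hpos x hx
  · intro s
    rw [Measure.map_apply hVm measurableSet_Iio,
      Measure.restrict_apply (hVm measurableSet_Iio)]
    congr 1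
    ext x
    simp only [mem_inter_iff, mem_preimage, mem_Iio, mem_ofPred_eq]
    constructor
    · rintro ⟨a, b⟩
      exact ⟨b, by rwa [← hV x b]⟩
    · rintro ⟨b, a⟩
      exact ⟨by rwa [hV x b], b⟩
  · intro τ
    have hset : {p : ℝ × ℝ | p.1 ∈ Ioo (-1 : ℝ) 1 ∧
          p.2 ^ 2 / v p.1 + α ^ 2 * v p.1 < α ^ 2 * τ}
        = {p : ℝ × ℝ | p.1 ∈ Ioo (-1 : ℝ) 1 ∧
          p.2 ^ 2 / V p.1 + α ^ 2 * V p.1 < α ^ 2 * τ} := by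
      ext p
      simp only [mem_ofPred_eq]
      refine and_congr_right fun hp => ?_
      rw [hV _ hp]
    have hms : MeasurableSet {p : ℝ × ℝ | p.1 ∈ Ioo (-1 : ℝ) 1 ∧
          p.2 ^ 2 / V p.1 + α ^ 2 * V p.1 < α ^ 2 * τ} :=
      (measurable_fst measurableSet_Ioo).inter
        (measurableSet_lt (f := fun p : ℝ × ℝ => p.2 ^ 2 / V p.1 + α ^ 2 * V p.1)
          (g := fun _ => α ^ 2 * τ) (by fun_prop) (by fun_prop))
    rw [hset, Measure.volume_eq_prod, Measure.prod_apply hms,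
      lintegral_map (by fun_prop) hVm, ← lintegral_const_mul _ (by fun_prop),
      ← lintegral_indicator measurableSet_Ioo]
    refine lintegral_congr fun x => ?_
    by_cases hx : x ∈ Ioo (-1 : ℝ) 1
    · rw [indicator_of_mem hx]
      have hp : 0 < V x := by rw [hV x hx]; exact hpos x hx
      have hsec : Prod.mk x ⁻¹' {p : ℝ × ℝ | p.1 ∈ Ioo (-1 : ℝ) 1 ∧
          p.2 ^ 2 / V p.1 + α ^ 2 * V p.1 < α ^ 2 * τ}
          = Ioo (-(√(α ^ 2 * (V x * (τ - V x))))) (√(α ^ 2 * (V x * (τ - V x)))) := by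
        ext ξ
        simp only [mem_preimage, mem_ofPred_eq, mem_Ioo]
        rw [← Real.sq_lt, ← lt_sub_iff_add_lt, div_lt_iff₀ hp]
        have : (α ^ 2 * τ - α ^ 2 * V x) * V x = α ^ 2 * (V x * (τ - V x)) := by ring
        rw [this]
        exact and_iff_right hx
      rw [hsec, Real.volume_Ioo, Real.sqrt_mul (sq_nonneg α), Real.sqrt_sq_eq_abs,
        Real.sqrt_mul hp.le, ← ENNReal.ofReal_mul (by positivity),
        ← ENNReal.ofReal_mul (by positivity)]
      congr 1
      ring
    · rw [indicator_of_notMem hx]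
      have hsec : Prod.mk x ⁻¹' {p : ℝ × ℝ | p.1 ∈ Ioo (-1 : ℝ) 1 ∧
          p.2 ^ 2 / V p.1 + α ^ 2 * V p.1 < α ^ 2 * τ} = ∅ := by
        ext ξ
        simp only [mem_preimage, mem_ofPred_eq, hx, false_and, mem_empty_iff_false]
      rw [hsec, measure_empty]

lemma well_min (w : ℝ → ℝ) (hc : ContinuousOn w (Ioo (-1) 1))
    (ha : StrictAntiOn w (Ioo (-1) 0)) (hm : StrictMonoOn w (Ioo 0 1)) :
    ∀ x ∈ Ioo (-1 : ℝ) 1, w 0 ≤ w x := by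
  intro x hx
  have h0 : ContinuousAt w 0 := hc.continuousAt (Ioo_mem_nhds (by norm_num) (by norm_num))
  rcases lt_trichotomy x 0 with h | h | h
  · refine le_of_tendsto (h0.tendsto.mono_left (nhdsWithin_le_nhds (s := Iio 0))) ?_
    filter_upwards [Ioo_mem_nhdsLT h] with y hy
    exact (ha ⟨hx.1, h⟩ ⟨hx.1.trans hy.1, hy.2⟩ hy.1).le
  · rw [h]
  · refine le_of_tendsto (h0.tendsto.mono_left (nhdsWithin_le_nhds (s := Ioi 0))) ?_
    filter_upwards [Ioo_mem_nhdsGT h] with y hy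
    exact (hm ⟨hy.1, hy.2.trans hx.2⟩ ⟨h, hx.2⟩ hy.2).le

lemma min_le_of_sublevel (v w : ℝ → ℝ) (hcv : ContinuousOn v (Ioo (-1) 1))
    (hmin : ∀ x ∈ Ioo (-1 : ℝ) 1, w 0 ≤ w x)
    (h : ∀ s, volume {x : ℝ | x ∈ Ioo (-1 : ℝ) 1 ∧ v x < s}
          = volume {x : ℝ | x ∈ Ioo (-1 : ℝ) 1 ∧ w x < s}) : w 0 ≤ v 0 := by
  by_contra! hlt
  have e : {x : ℝ | x ∈ Ioo (-1 : ℝ) 1 ∧ w x < w 0} = ∅ := by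
    ext x
    simp only [mem_ofPred_eq, mem_empty_iff_false, iff_false, not_and, not_lt]
    exact hmin x
  have h1 := h (w 0)
  rw [e, measure_empty] at h1
  have ho : IsOpen {x : ℝ | x ∈ Ioo (-1 : ℝ) 1 ∧ v x < w 0} :=
    hcv.isOpen_inter_preimage isOpen_Ioo isOpen_Iio
  have hn : {x : ℝ | x ∈ Ioo (-1 : ℝ) 1 ∧ v x < w 0}.Nonempty :=
    ⟨0, ⟨by norm_num, by norm_num⟩, hlt⟩
  exact (ho.measure_pos volume hn).ne' h1

/-- If two positive C¹ single wells `v`, `w` on `(-1,1)` (tending to `+∞` at `±1`) give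
sublevel regions `{ξ²/v + α²v < λ}` and `{ξ²/w + α²w < λ}` of equal area for every `λ`, then
their minimum values agree and the sublevel sets `{v < s}` and `{w < s}` have equal measure for
every `s` above the common minimum value. -/
theorem leading_invariant_determines_sublevel_measures
    (α : ℝ) (hα : α ≠ 0) (v w : ℝ → ℝ)
    (hv_diff : ContDiffOn ℝ 1 v (Ioo (-1) 1))
    (hw_diff : ContDiffOn ℝ 1 w (Ioo (-1) 1))
    (hv_pos : ∀ x ∈ Ioo (-1 : ℝ) 1, 0 < v x)
    (hw_pos : ∀ x ∈ Ioo (-1 : ℝ) 1, 0 < w x)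
    (hv_anti : StrictAntiOn v (Ioo (-1) 0)) (hv_mono : StrictMonoOn v (Ioo 0 1))
    (hw_anti : StrictAntiOn w (Ioo (-1) 0)) (hw_mono : StrictMonoOn w (Ioo 0 1))
    (hv_left : Tendsto v (𝓝[>] (-1 : ℝ)) atTop) (hv_right : Tendsto v (𝓝[<] (1 : ℝ)) atTop)
    (hw_left : Tendsto w (𝓝[>] (-1 : ℝ)) atTop) (hw_right : Tendsto w (𝓝[<] (1 : ℝ)) atTop)
    (hcv : 0 < v 0) (hcw : 0 < w 0)
    (hmeas : ∀ L : ℝ,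
      volume {p : ℝ × ℝ | p.1 ∈ Ioo (-1 : ℝ) 1 ∧ p.2 ^ 2 / v p.1 + α ^ 2 * v p.1 < L}
        = volume {p : ℝ × ℝ | p.1 ∈ Ioo (-1 : ℝ) 1 ∧ p.2 ^ 2 / w p.1 + α ^ 2 * w p.1 < L}) :
    v 0 = w 0 ∧
      ∀ s > v 0,
        volume {x : ℝ | x ∈ Ioo (-1 : ℝ) 1 ∧ v x < s}
          = volume {x : ℝ | x ∈ Ioo (-1 : ℝ) 1 ∧ w x < s} := by
  obtain ⟨μ₁, f₁, p₁, s₁, a₁⟩ := exists_dist α hα v hv_diff.continuousOn hv_pos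
  obtain ⟨μ₂, f₂, p₂, s₂, a₂⟩ := exists_dist α hα w hw_diff.continuousOn hw_pos
  have hμ : μ₁ = μ₂ := by
    refine abel_injective p₁ p₂ fun τ => ?_
    have := hmeas (α ^ 2 * τ)
    rw [a₁, a₂] at this
    exact (ENNReal.mul_right_inj (by simpa using hα) ENNReal.ofReal_ne_top).1 this
  have hs : ∀ s, volume {x : ℝ | x ∈ Ioo (-1 : ℝ) 1 ∧ v x < s}
          = volume {x : ℝ | x ∈ Ioo (-1 : ℝ) 1 ∧ w x < s} := by
    intro s
    rw [← s₁, ← s₂, hμ]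
  refine ⟨le_antisymm ?_ ?_, fun s _ => hs s⟩
  · exact min_le_of_sublevel w v hw_diff.continuousOn
      (well_min v hv_diff.continuousOn hv_anti hv_mono) (fun s => (hs s).symm)
  · exact min_le_of_sublevel v w hv_diff.continuousOn
      (well_min w hw_diff.continuousOn hw_anti hw_mono) hs
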